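/- arXiv:1411.7363 — 2 statements merged into one kernel-verified Lean document; each statement's English description precedes it below -/
import Mathlib

section
/- Every connected component of the complement ℝⁿ \ 𝒯(A,c) of a combinatorial tropical hypersurface is a convex set (i.e., the complement of 𝒯(A,c) is 0-convex). -/
open RealInnerProductSpace

/-!
Fix a point off the hypersurface and let `i` be the unique index attaining the minimum there. The
region where `i` attains the minimum is closed, and off the hypersurface it coincides with the
region where `i` is the only minimizer, which is open. So the latter is relatively clopen in the
complement; being a finite intersection of open half-spaces it is convex, hence connected, and
therefore it is the whole connected component.
-/

section MinRegions

variable {ι X α : Type*} [LinearOrder α] {f : ι → X → α} {s : Set ι} {i : ι} {x : X}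

/-- The points at which the `i`-th function attains the minimum of the family `f` over `s`: a closed
cell of the subdivision induced by the minimum. Meant for `i ∈ s`, which is not part of the
definition. -/
def minRegion (f : ι → X → α) (s : Set ι) (i : ι) : Set X :=
  {x | ∀ j ∈ s, f i x ≤ f j x}

/-- The points at which, among the indices in `s`, only `i` attains the minimum of the family `f`:
an open cell of the complement of a tropical hypersurface. -/
def strictMinRegion (f : ι → X → α) (s : Set ι) (i : ι) : Set X :=
  {x | ∀ j ∈ s, j ≠ i → f i x < f j x}

/-- The points at which the minimum of the family `f` over `s` is attained by two distinct indices.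
For `f a x = c a + ⟪a, x⟫` this is the tropical hypersurface `𝒯(s, c)`. Indices are compared rather
than functions, so a function listed twice ties with itself. -/
def minTieLocus (f : ι → X → α) (s : Set ι) : Set X :=
  {x | ∃ i ∈ s, ∃ j ∈ s, i ≠ j ∧ x ∈ minRegion f s i ∧ x ∈ minRegion f s j}

theorem strictMinRegion_subset_minRegion : strictMinRegion f s i ⊆ minRegion f s i := by
  intro x hx j hj
  obtain rfl | hji := eq_or_ne j i
  · exact le_rfl
  · exact (hx j hj hji).le

theorem eq_of_mem_strictMinRegion_of_mem_minRegion {j : ι} (hi : i ∈ s) (hj : j ∈ s)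
    (hxi : x ∈ strictMinRegion f s i) (hxj : x ∈ minRegion f s j) : j = i := by
  by_contra hji
  exact (hxi j hj hji).not_ge (hxj i hi)

theorem strictMinRegion_subset_compl_minTieLocus (hi : i ∈ s) :
    strictMinRegion f s i ⊆ (minTieLocus f s)ᶜ := by
  rintro x hx ⟨j, hj, k, hk, hjk, hxj, hxk⟩
  have hji : j = i := eq_of_mem_strictMinRegion_of_mem_minRegion hi hj hx hxj
  have hki : k = i := eq_of_mem_strictMinRegion_of_mem_minRegion hi hk hx hxk
  exact hjk (hji.trans hki.symm)

theorem minRegion_diff_minTieLocus_subset_strictMinRegion (hi : i ∈ s) :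
    minRegion f s i \ minTieLocus f s ⊆ strictMinRegion f s i := by
  rintro x ⟨hxi, hxT⟩ j hj hji
  by_contra! hle
  have hxj : x ∈ minRegion f s j := fun k hk ↦ hle.trans (hxi k hk)
  exact hxT ⟨i, hi, j, hj, hji.symm, hxi, hxj⟩

theorem exists_mem_minRegion (hs : s.Finite) (hne : s.Nonempty) (f : ι → X → α) (x : X) :
    ∃ i ∈ s, x ∈ minRegion f s i :=
  Set.exists_min_image s (f · x) hs hne

section Topology

variable [TopologicalSpace X] [TopologicalSpace α] [OrderClosedTopology α]

theorem isClosed_minRegion (hf : ∀ j ∈ s, Continuous (f j)) (hi : i ∈ s) :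
    IsClosed (minRegion f s i) := by
  simp only [minRegion, Set.ofPred_forall]
  exact isClosed_biInter fun j hj ↦ isClosed_le (hf i hi) (hf j hj)

theorem isOpen_strictMinRegion (hs : s.Finite) (hf : ∀ j ∈ s, Continuous (f j)) (hi : i ∈ s) :
    IsOpen (strictMinRegion f s i) := by
  simp only [strictMinRegion, Set.ofPred_forall]
  exact hs.isOpen_biInter fun j hj ↦ isOpen_iInter_of_finite fun _ ↦ isOpen_lt (hf i hi) (hf j hj)

theorem connectedComponentIn_compl_minTieLocus_eq_strictMinRegion (hs : s.Finite)
    (hf : ∀ j ∈ s, Continuous (f j)) (hi : i ∈ s)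
    (hconn : IsPreconnected (strictMinRegion f s i)) (hx : x ∈ strictMinRegion f s i) :
    connectedComponentIn (minTieLocus f s)ᶜ x = strictMinRegion f s i := by
  have hsub : strictMinRegion f s i ⊆ (minTieLocus f s)ᶜ :=
    strictMinRegion_subset_compl_minTieLocus hi
  have hcover : (minTieLocus f s)ᶜ ⊆ strictMinRegion f s i ∪ (minRegion f s i)ᶜ := by
    intro y hyT
    by_cases hyi : y ∈ minRegion f s i
    · exact .inl (minRegion_diff_minTieLocus_subset_strictMinRegion hi ⟨hyi, hyT⟩)
    · exact .inr hyi
  have hdisj : Disjoint (strictMinRegion f s i) (minRegion f s i)ᶜ :=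
    Set.disjoint_compl_right_iff_subset.mpr strictMinRegion_subset_minRegion
  apply Set.Subset.antisymm
  · exact isPreconnected_connectedComponentIn.subset_left_of_subset_union
      (isOpen_strictMinRegion hs hf hi) (isClosed_minRegion hf hi).isOpen_compl hdisj
      ((connectedComponentIn_subset _ _).trans hcover)
      ⟨x, mem_connectedComponentIn (hsub hx), hx⟩
  · exact hconn.subset_connectedComponentIn hx hsub

end Topology

end MinRegions

theorem convex_strictMinRegion {𝕜 ι E : Type*} [Field 𝕜] [LinearOrder 𝕜] [IsStrictOrderedRing 𝕜]
    [AddCommGroup E] [Module 𝕜 E] (f : ι → E →ᵃ[𝕜] 𝕜) (s : Set ι) (i : ι) :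
    Convex 𝕜 (strictMinRegion (fun j ↦ ⇑(f j)) s i) := by
  have hhalfSpace (j : ι) : Convex 𝕜 {x | f i x < f j x} := by
    simpa [Set.preimage] using (convex_Iio (0 : 𝕜)).affine_preimage (f i - f j)
  simp only [strictMinRegion, Set.ofPred_forall]
  exact convex_iInter₂ fun j _ ↦ convex_iInter fun _ ↦ hhalfSpace j

theorem complement_of_tropical_hypersurface_is_zero_convex_general {ι E : Type*}
    [AddCommGroup E] [Module ℝ E] [TopologicalSpace E] [ContinuousAdd E] [ContinuousSMul ℝ E]
    (f : ι → E →ᴬ[ℝ] ℝ) {s : Set ι} (hs : s.Finite) (hne : s.Nonempty)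
    {x : E} (hx : x ∈ (minTieLocus (fun i ↦ ⇑(f i)) s)ᶜ) :
    Convex ℝ (connectedComponentIn (minTieLocus (fun i ↦ ⇑(f i)) s)ᶜ x) := by
  obtain ⟨i, hi, hxi⟩ := exists_mem_minRegion hs hne (fun i ↦ ⇑(f i)) x
  have hxi' : x ∈ strictMinRegion (fun i ↦ ⇑(f i)) s i :=
    minRegion_diff_minTieLocus_subset_strictMinRegion hi ⟨hxi, hx⟩
  have hconvex : Convex ℝ (strictMinRegion (fun i ↦ ⇑(f i)) s i) :=
    convex_strictMinRegion (fun i ↦ (f i : E →ᵃ[ℝ] ℝ)) s i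
  rwa [connectedComponentIn_compl_minTieLocus_eq_strictMinRegion hs
    (fun j _ ↦ (f j).continuous) hi hconvex.isPreconnected hxi']

/-- Every connected component of the complement of a combinatorial
tropical hypersurface `𝒯(A,c)` in `ℝⁿ` is convex (`0`-convexity of the complement).
Here `𝒯(A,c)` is the set of points `x` at which the minimum
`min_{a ∈ A} (c a + ⟪a, x⟫)` is attained by at least two distinct elements of `A`. -/
theorem complement_of_tropical_hypersurface_is_zero_convex
    (n : ℕ) (hn : 1 ≤ n)
    (A : Finset (EuclideanSpace ℝ (Fin n))) (hA : A.Nonempty)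
    (c : EuclideanSpace ℝ (Fin n) → ℝ)
    (𝒯 : Set (EuclideanSpace ℝ (Fin n)))
    (h𝒯 : 𝒯 = {x | ∃ a ∈ A, ∃ b ∈ A, a ≠ b ∧
        (∀ e ∈ A, c a + ⟪a, x⟫ ≤ c e + ⟪e, x⟫) ∧
        (∀ e ∈ A, c b + ⟪b, x⟫ ≤ c e + ⟪e, x⟫)})
    (x : EuclideanSpace ℝ (Fin n)) (hx : x ∈ 𝒯ᶜ) :
    Convex ℝ (connectedComponentIn 𝒯ᶜ x) := by
  subst h𝒯
  exact complement_of_tropical_hypersurface_is_zero_convex_general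
    (fun a ↦ .const ℝ _ (c a) + (innerSL ℝ a).toContinuousAffineMap) A.finite_toSet hA hx
end

section
/- Every connected component of a weakly balanced graph 𝒞 = ⋃_i E_i in ℝⁿ is an unbounded subset of ℝⁿ. -/
open RealInnerProductSpace

/-- An edge in `ℝⁿ`: either a closed segment `[a, b]` with `a ≠ b`, or a closed ray
`{a + t • v : t ≥ 0}` with `v ≠ 0`. -/
def IsEdge {n : ℕ} (E : Set (EuclideanSpace ℝ (Fin n))) : Prop :=
  (∃ a b : EuclideanSpace ℝ (Fin n), a ≠ b ∧ E = segment ℝ a b) ∨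
  (∃ a v : EuclideanSpace ℝ (Fin n), v ≠ 0 ∧ E = {x | ∃ t : ℝ, 0 ≤ t ∧ x = a + t • v})

/-- `p` is an endpoint of the edge `E`: an endpoint of the segment, or the
vertex of the ray. -/
def IsEndpointOf {n : ℕ} (E : Set (EuclideanSpace ℝ (Fin n)))
    (p : EuclideanSpace ℝ (Fin n)) : Prop :=
  (∃ a b : EuclideanSpace ℝ (Fin n), a ≠ b ∧ E = segment ℝ a b ∧ (p = a ∨ p = b)) ∨
  (∃ a v : EuclideanSpace ℝ (Fin n), v ≠ 0 ∧
    E = {x | ∃ t : ℝ, 0 ≤ t ∧ x = a + t • v} ∧ p = a)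

/-- The nonzero vector `u` points along the edge `E` away from the point `p`:
`p + s • u ∈ E` for all sufficiently small `s > 0`. -/
def PointsAwayFrom {n : ℕ} (E : Set (EuclideanSpace ℝ (Fin n)))
    (p u : EuclideanSpace ℝ (Fin n)) : Prop :=
  u ≠ 0 ∧ ∃ s₀ : ℝ, 0 < s₀ ∧ ∀ s : ℝ, 0 < s → s < s₀ → p + s • u ∈ E

/-- A weakly balanced graph in `ℝⁿ`: a locally finite family of edges (segments or rays),
any two distinct edges meeting at most in a single point that is an endpoint of both,
such that at every point `p` of the union `𝒞 = ⋃ i, E i` and for every `w ∈ ℝⁿ`, either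
`⟪w, u⟫ = 0` for every edge incident to `p` and every vector `u` pointing along it away
from `p`, or there are two edges incident to `p` and vectors pointing along them away
from `p` whose pairings with `w` have strictly opposite signs. -/
def IsWeaklyBalancedGraph {n : ℕ} {ι : Type*}
    (E : ι → Set (EuclideanSpace ℝ (Fin n))) : Prop :=
  (∀ i, IsEdge (E i)) ∧
  LocallyFinite E ∧
  (∀ i j, i ≠ j → ∀ p ∈ E i ∩ E j,
    E i ∩ E j = {p} ∧ IsEndpointOf (E i) p ∧ IsEndpointOf (E j) p) ∧
  (∀ p ∈ ⋃ i, E i, ∀ w : EuclideanSpace ℝ (Fin n),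
    (∀ i, p ∈ E i → ∀ u, PointsAwayFrom (E i) p u → ⟪w, u⟫ = 0) ∨
    (∃ i j, p ∈ E i ∧ p ∈ E j ∧ ∃ ui uj : EuclideanSpace ℝ (Fin n),
      PointsAwayFrom (E i) p ui ∧ PointsAwayFrom (E j) p uj ∧
      ⟪w, ui⟫ < 0 ∧ 0 < ⟪w, uj⟫))

/-!
A bounded component is compact, because `𝒞` is closed, so it has a point `q` farthest from the
origin. Moving from `q` in a direction `u` with `⟪q, u⟫ ≥ 0` strictly increases the norm, so every
direction available at `q` pairs strictly negatively with `q`. Weak balancing at `q` with `w = q`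
forbids this, since some direction is available at `q`.
-/

section ConnectedComponents

variable {X : Type*} [TopologicalSpace X] {C : Set X}

theorem isClosed_connectedComponentIn (hC : IsClosed C) (p : X) :
    IsClosed (connectedComponentIn C p) := by
  by_cases hp : p ∈ C
  · refine isClosed_of_closure_subset ?_
    exact isPreconnected_connectedComponentIn.closure.subset_connectedComponentIn
      (subset_closure (mem_connectedComponentIn hp))
      (closure_minimal (connectedComponentIn_subset C p) hC)
  · rw [connectedComponentIn_eq_empty hp]
    exact isClosed_empty

end ConnectedComponents

section InitialDirections

open Filter Set
open scoped Topology

/-- The nonzero directions in which one can leave `p` while staying in `C` for a short time; the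
analogue of `PointsAwayFrom` for an arbitrary set in a real vector space. -/
def initialDirections {V : Type*} [AddCommGroup V] [Module ℝ V] (C : Set V) (p : V) : Set V :=
  {u | u ≠ 0 ∧ ∀ᶠ s in 𝓝[>] (0 : ℝ), p + s • u ∈ C}

section Module

variable {V : Type*} [AddCommGroup V] [Module ℝ V] {C D : Set V} {p : V}

theorem initialDirections_mono (hCD : C ⊆ D) (p : V) :
    initialDirections C p ⊆ initialDirections D p :=
  fun _ ⟨hu, hmem⟩ ↦ ⟨hu, hmem.mono fun _ hs ↦ hCD hs⟩

theorem sub_mem_initialDirections (hC : Convex ℝ C) {q : V} (hp : p ∈ C) (hq : q ∈ C)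
    (hqp : q ≠ p) : q - p ∈ initialDirections C p := by
  refine ⟨sub_ne_zero.2 hqp, ?_⟩
  filter_upwards [Ioo_mem_nhdsGT one_pos] with s hs
  exact hC.add_smul_sub_mem hp hq (Ioo_subset_Icc_self hs)

theorem initialDirections_subset_initialDirections_connectedComponentIn [TopologicalSpace V]
    [ContinuousAdd V] [ContinuousSMul ℝ V] (hp : p ∈ C) :
    initialDirections C p ⊆ initialDirections (connectedComponentIn C p) p := by
  rintro u ⟨hu, hmem⟩
  obtain ⟨ε, hε, hIoo⟩ := mem_nhdsGT_iff_exists_Ioo_subset.1 hmem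
  set γ : ℝ → V := fun s ↦ p + s • u
  have hγ_zero : γ 0 = p := by simp [γ]
  have hγ_mem : γ '' Ico 0 ε ⊆ C := by
    rintro _ ⟨s, hs, rfl⟩
    rcases hs.1.eq_or_lt with rfl | hs_pos
    · rwa [hγ_zero]
    · exact hIoo ⟨hs_pos, hs.2⟩
  have hγ_conn : IsPreconnected (γ '' Ico 0 ε) :=
    isPreconnected_Ico.image γ (by fun_prop)
  have hγ_comp : γ '' Ico 0 ε ⊆ connectedComponentIn C p :=
    hγ_conn.subset_connectedComponentIn ⟨0, ⟨le_rfl, hε⟩, hγ_zero⟩ hγ_mem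
  refine ⟨hu, ?_⟩
  filter_upwards [Ioo_mem_nhdsGT hε] with s hs
  exact hγ_comp (mem_image_of_mem γ (Ioo_subset_Ico_self hs))

end Module

variable {V : Type*} [NormedAddCommGroup V] [InnerProductSpace ℝ V]

theorem norm_lt_norm_add_of_inner_nonneg {x y : V} (hy : y ≠ 0) (hxy : 0 ≤ ⟪x, y⟫) :
    ‖x‖ < ‖x + y‖ := by
  refine lt_of_pow_lt_pow_left₀ 2 (norm_nonneg _) ?_
  have hy_sq : 0 < ‖y‖ ^ 2 := pow_pos (norm_pos_iff.2 hy) 2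
  rw [norm_add_sq_real]
  linarith

theorem inner_neg_of_mem_initialDirections_of_isMaxOn_norm {K : Set V} {q u : V}
    (hq : IsMaxOn norm K q) (hu : u ∈ initialDirections K q) : ⟪q, u⟫ < 0 := by
  by_contra! hqu
  obtain ⟨s, hsK, hs⟩ := (hu.2.and self_mem_nhdsWithin).exists
  have hs_pos : (0 : ℝ) < s := hs
  have hqsu : 0 ≤ ⟪q, s • u⟫ := by
    rw [real_inner_smul_right]
    positivity
  exact (norm_lt_norm_add_of_inner_nonneg (smul_ne_zero hs_pos.ne' hu.1) hqsu).not_ge (hq hsK)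

theorem weakly_balanced_graph_components_unbounded_general [ProperSpace V] {C : Set V}
    (hC : IsClosed C)
    (hdir : ∀ q ∈ C, ∀ w : V, ∃ u ∈ initialDirections C q, 0 ≤ ⟪w, u⟫)
    {p : V} (hp : p ∈ C) : ¬ Bornology.IsBounded (connectedComponentIn C p) := by
  intro hbdd
  have hcompact : IsCompact (connectedComponentIn C p) :=
    Metric.isCompact_of_isClosed_isBounded (isClosed_connectedComponentIn hC p) hbdd
  obtain ⟨q, hqK, hq_max⟩ :=
    hcompact.exists_isMaxOn ⟨p, mem_connectedComponentIn hp⟩ continuous_norm.continuousOn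
  have hqC : q ∈ C := connectedComponentIn_subset C p hqK
  obtain ⟨u, hu, hqu⟩ := hdir q hqC q
  have huK : u ∈ initialDirections (connectedComponentIn C p) q := by
    rw [connectedComponentIn_eq hqK]
    exact initialDirections_subset_initialDirections_connectedComponentIn hqC hu
  exact (inner_neg_of_mem_initialDirections_of_isMaxOn_norm hq_max huK).not_ge hqu

end InitialDirections

section LineMap

variable {V : Type*} [AddCommGroup V] [Module ℝ V]

theorem isClosedEmbedding_lineMap [TopologicalSpace V] [IsTopologicalAddGroup V]
    [ContinuousSMul ℝ V] [T2Space V] {a b : V} (hab : a ≠ b) :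
    Topology.IsClosedEmbedding (AffineMap.lineMap a b : ℝ →ᵃ[ℝ] V) := by
  have hcomp : ⇑(AffineMap.lineMap a b : ℝ →ᵃ[ℝ] V) =
      Homeomorph.addRight a ∘ fun t : ℝ ↦ t • (b - a) := by
    ext t
    simp [AffineMap.lineMap_apply]
  rw [hcomp]
  exact (Homeomorph.addRight a).isClosedEmbedding.comp
    (isClosedEmbedding_smul_left (sub_ne_zero.2 hab.symm))

theorem ray_eq_lineMap_image (a v : V) :
    {x | ∃ t : ℝ, 0 ≤ t ∧ x = a + t • v} = AffineMap.lineMap a (a + v) '' Set.Ici (0 : ℝ) := by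
  ext x
  simp [AffineMap.lineMap_apply, add_comm, eq_comm]

end LineMap

section Graph

variable {n : ℕ} {ι : Type*}

theorem IsEdge.exists_eq_lineMap_image {E : Set (EuclideanSpace ℝ (Fin n))} (hE : IsEdge E) :
    ∃ (a b : EuclideanSpace ℝ (Fin n)) (I : Set ℝ), a ≠ b ∧ IsClosed I ∧ Convex ℝ I ∧
      I.Nontrivial ∧ E = AffineMap.lineMap a b '' I := by
  rcases hE with ⟨a, b, hab, rfl⟩ | ⟨a, v, hv, rfl⟩
  · exact ⟨a, b, Set.Icc 0 1, hab, isClosed_Icc, convex_Icc 0 1,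
      ⟨0, by simp, 1, by simp, zero_ne_one⟩, segment_eq_image_lineMap ℝ a b⟩
  · exact ⟨a, a + v, Set.Ici 0, by simpa using hv, isClosed_Ici, convex_Ici 0,
      ⟨0, by simp, 1, by simp, zero_ne_one⟩, ray_eq_lineMap_image a v⟩

theorem IsEdge.isClosed {E : Set (EuclideanSpace ℝ (Fin n))} (hE : IsEdge E) : IsClosed E := by
  obtain ⟨a, b, I, hab, hI, -, -, rfl⟩ := hE.exists_eq_lineMap_image
  exact (isClosedEmbedding_lineMap hab).isClosedMap I hI

theorem IsEdge.convex {E : Set (EuclideanSpace ℝ (Fin n))} (hE : IsEdge E) : Convex ℝ E := by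
  obtain ⟨a, b, I, -, -, hI, -, rfl⟩ := hE.exists_eq_lineMap_image
  exact hI.affine_image _

theorem IsEdge.nontrivial {E : Set (EuclideanSpace ℝ (Fin n))} (hE : IsEdge E) :
    E.Nontrivial := by
  obtain ⟨a, b, I, hab, -, -, hI, rfl⟩ := hE.exists_eq_lineMap_image
  exact hI.image (AffineMap.lineMap_injective ℝ hab)

theorem pointsAwayFrom_iff_mem_initialDirections {E : Set (EuclideanSpace ℝ (Fin n))}
    {p u : EuclideanSpace ℝ (Fin n)} : PointsAwayFrom E p u ↔ u ∈ initialDirections E p := by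
  refine and_congr_right fun _ ↦ ?_
  simp only [Filter.Eventually, mem_nhdsGT_iff_exists_Ioo_subset, Set.subset_def, Set.mem_Ioo,
    and_imp, Set.mem_Ioi, Set.mem_ofPred_eq]

theorem IsEdge.initialDirections_nonempty {E : Set (EuclideanSpace ℝ (Fin n))} (hE : IsEdge E)
    {p : EuclideanSpace ℝ (Fin n)} (hp : p ∈ E) : (initialDirections E p).Nonempty := by
  obtain ⟨q, hq, hqp⟩ := hE.nontrivial.exists_ne p
  exact ⟨q - p, sub_mem_initialDirections hE.convex hp hq hqp⟩

theorem IsWeaklyBalancedGraph.isClosed_iUnion {E : ι → Set (EuclideanSpace ℝ (Fin n))}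
    (hE : IsWeaklyBalancedGraph E) : IsClosed (⋃ i, E i) :=
  hE.2.1.isClosed_iUnion fun i ↦ (hE.1 i).isClosed

theorem IsWeaklyBalancedGraph.exists_initialDirections_inner_nonneg
    {E : ι → Set (EuclideanSpace ℝ (Fin n))} (hE : IsWeaklyBalancedGraph E)
    {p : EuclideanSpace ℝ (Fin n)} (hp : p ∈ ⋃ i, E i) (w : EuclideanSpace ℝ (Fin n)) :
    ∃ u ∈ initialDirections (⋃ i, E i) p, 0 ≤ ⟪w, u⟫ := by
  obtain ⟨hedge, -, -, hbal⟩ := hE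
  suffices ∃ i, ∃ u ∈ initialDirections (E i) p, 0 ≤ ⟪w, u⟫ by
    obtain ⟨i, u, hu, hwu⟩ := this
    exact ⟨u, initialDirections_mono (Set.subset_iUnion E i) p hu, hwu⟩
  rcases hbal p hp w with horth | ⟨-, j, -, -, -, u, -, hu, -, hwu⟩
  · obtain ⟨i, hi⟩ := Set.mem_iUnion.1 hp
    obtain ⟨u, hu⟩ := (hedge i).initialDirections_nonempty hi
    exact ⟨i, u, hu, (horth i hi u (pointsAwayFrom_iff_mem_initialDirections.2 hu)).ge⟩
  · exact ⟨j, u, pointsAwayFrom_iff_mem_initialDirections.1 hu, hwu.le⟩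

end Graph

/-- Every connected component of a weakly balanced graph `𝒞 = ⋃ i, E i`
in `ℝⁿ` is an unbounded subset of `ℝⁿ`. -/
theorem weakly_balanced_graph_components_unbounded
    (n : ℕ) {ι : Type*} (E : ι → Set (EuclideanSpace ℝ (Fin n)))
    (hE : IsWeaklyBalancedGraph E)
    (p : EuclideanSpace ℝ (Fin n)) (hp : p ∈ ⋃ i, E i) :
    ¬ Bornology.IsBounded (connectedComponentIn (⋃ i, E i) p) :=
  weakly_balanced_graph_components_unbounded_general hE.isClosed_iUnion
    (fun _ hq w ↦ hE.exists_initialDirections_inner_nonneg hq w) hp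
end
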